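/- Let π : X → Y be a submetry between metric spaces with X compact, and let ρ₀ ≥ 0 satisfy diam(π⁻¹(y)) ≤ 2ρ₀ for every y ∈ Y. For p ∈ X and t ∈ [0, ρ₀], define h_{p,t} ∈ C_b(X, ℝ) by h_{p,t}(z) = max(dist(p, z) − t, min(dist(p, z) + t, dist(π(p), π(z)) + ρ₀)). Then: (i) h_{p,0} = dist_p; (ii) h_{p,ρ₀}(z) = dist(π(p), π(z)) + ρ₀ for all z ∈ X; (iii) ‖h_{p,t} − dist_p‖_∞ ≤ t, so each h_{p,t} lies within distance ρ₀ of the image Φ(X) of the Kuratowski embedding; (iv) ‖h_{p,t} − h_{p',t'}‖_∞ ≤ dist(p, p') + |t − t'| for all p, p' ∈ X and t, t' ∈ [0, ρ₀], so (p, t) ↦ h_{p,t} is continuous. -/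

import Mathlib

open Metric BoundedContinuousFunction

/-- A submetry: a map between metric spaces sending every closed ball centered at `p`
of radius `r ≥ 0` onto the closed ball of the same radius centered at `π p`. -/
def IsSubmetry {X Y : Type*} [MetricSpace X] [MetricSpace Y] (π : X → Y) : Prop :=
  ∀ (p : X) (r : ℝ), 0 ≤ r → π '' Metric.closedBall p r = Metric.closedBall (π p) r

/-- The Kuratowski embedding of a compact metric space `X` into `C_b(X, ℝ)`. -/
noncomputable def distFun (X : Type*) [MetricSpace X] [CompactSpace X] (p : X) :
    BoundedContinuousFunction X ℝ :=
  .mkOfCompact ⟨fun z => dist p z, by fun_prop⟩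

/-!
For `t ≥ 0` the value `h_{p,t}(z)` is the point of the interval `[dist p z - t, dist p z + t]`
nearest to the target `dist (π p) (π z) + ρ₀`. A submetry is `1`-Lipschitz, and lifting `π p` to a
point near `z` shows that it decreases distances by at most the diameter of a fibre, hence by at
most `2ρ₀`. So the target is within `ρ₀` of `dist p z` and is reached at time `ρ₀`. Distance
functions, `max` and `min` are nonexpansive, which makes `(p, t) ↦ h_{p,t}` `1`-Lipschitz in each
variable; comparing with `t = 0` bounds the distance to `Φ(X)`.
-/

section LinearOrder

variable {α : Type*} [AddCommGroup α] [LinearOrder α] [IsOrderedAddMonoid α]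

theorem max_sub_min_add_eq_of_abs_sub_le {a b t : α} (h : |b - a| ≤ t) :
    max (a - t) (min (a + t) b) = b := by
  obtain ⟨hlower, hupper⟩ := abs_sub_le_iff.mp h
  rw [min_eq_right (sub_le_iff_le_add'.mp hlower), max_eq_right (sub_le_comm.mp hupper)]

theorem abs_max_sub_min_add_sub_le (a a' t t' b b' : α) :
    |max (a - t) (min (a + t) b) - max (a' - t') (min (a' + t') b')| ≤
      max (|a - a'| + |t - t'|) |b - b'| := by
  have hlower : |(a - t) - (a' - t')| ≤ |a - a'| + |t - t'| := by
    rw [sub_sub_sub_comm]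
    exact abs_sub _ _
  have hupper : |(a + t) - (a' + t')| ≤ |a - a'| + |t - t'| := by
    rw [add_sub_add_comm]
    exact abs_add_le _ _
  calc |max (a - t) (min (a + t) b) - max (a' - t') (min (a' + t') b')|
      ≤ max |(a - t) - (a' - t')| |min (a + t) b - min (a' + t') b'| :=
        abs_max_sub_max_le_max _ _ _ _
    _ ≤ max |(a - t) - (a' - t')| (max |(a + t) - (a' + t')| |b - b'|) :=
        max_le_max_left _ (abs_min_sub_min_le_max _ _ _ _)
    _ ≤ max (|a - a'| + |t - t'|) |b - b'| :=
        max_le (hlower.trans (le_max_left _ _)) (max_le_max_right _ hupper)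

end LinearOrder

namespace IsSubmetry

variable {X Y : Type*} [MetricSpace X] [MetricSpace Y] {π : X → Y}

theorem lipschitzWith_one (hπ : IsSubmetry π) : LipschitzWith 1 π := by
  refine LipschitzWith.mk_one fun z p => ?_
  have hz : π z ∈ closedBall (π p) (dist z p) := by
    rw [← hπ p _ dist_nonneg]
    exact Set.mem_image_of_mem π (mem_closedBall.mpr le_rfl)
  exact mem_closedBall.mp hz

theorem exists_eq_and_dist_le (hπ : IsSubmetry π) (z : X) (y : Y) :
    ∃ w, π w = y ∧ dist w z ≤ dist y (π z) := by
  have hy : y ∈ π '' closedBall z (dist y (π z)) := by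
    rw [hπ z _ dist_nonneg]
    exact mem_closedBall.mpr le_rfl
  obtain ⟨w, hw, hwy⟩ := hy
  exact ⟨w, hwy, mem_closedBall.mp hw⟩

theorem dist_le_dist_add_diam_fiber (hπ : IsSubmetry π) {p : X}
    (hbdd : Bornology.IsBounded (π ⁻¹' {π p})) (z : X) :
    dist p z ≤ dist (π p) (π z) + diam (π ⁻¹' {π p}) := by
  obtain ⟨w, hwp, hwz⟩ := hπ.exists_eq_and_dist_le z (π p)
  calc dist p z ≤ dist w z + dist p w := (dist_triangle p w z).trans_eq (add_comm _ _)
    _ ≤ dist (π p) (π z) + diam (π ⁻¹' {π p}) :=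
        add_le_add hwz (dist_le_diam_of_mem hbdd rfl hwp)

end IsSubmetry

/-- The function `h_{p,t}` of the mapping cylinder of a continuous map `f` out of a compact space,
where `c` (the paper's `ρ₀`) is the height at which the target end `dist (f p) (f ·) + c` sits.
The time `t` is an arbitrary real; for `t < 0` the formula gives `dist p z + |t|`. -/
noncomputable def cylinderFun {X Y : Type*} [PseudoMetricSpace X] [CompactSpace X]
    [PseudoMetricSpace Y] (f : C(X, Y)) (c : ℝ) (p : X) (t : ℝ) : BoundedContinuousFunction X ℝ :=
  .mkOfCompact
    ⟨fun z => max (dist p z - t) (min (dist p z + t) (dist (f p) (f z) + c)), by fun_prop⟩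

section PseudoMetricSpace

variable {X Y : Type*} [PseudoMetricSpace X] [CompactSpace X] [PseudoMetricSpace Y]
  {f : C(X, Y)} {c : ℝ}

theorem cylinderFun_apply (f : C(X, Y)) (c : ℝ) (p : X) (t : ℝ) (z : X) :
    cylinderFun f c p t z =
      max (dist p z - t) (min (dist p z + t) (dist (f p) (f z) + c)) :=
  rfl

theorem cylinderFun_self_apply {p z : X} (hle : dist (f p) (f z) ≤ dist p z)
    (hge : dist p z ≤ dist (f p) (f z) + 2 * c) :
    cylinderFun f c p c z = dist (f p) (f z) + c :=
  max_sub_min_add_eq_of_abs_sub_le <| abs_sub_le_iff.mpr ⟨by linarith, by linarith⟩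

theorem dist_cylinderFun_le (hf : LipschitzWith 1 f) (p p' : X) (t t' : ℝ) :
    dist (cylinderFun f c p t) (cylinderFun f c p' t') ≤ dist p p' + |t - t'| := by
  refine (BoundedContinuousFunction.dist_le (by positivity)).mpr fun z => ?_
  have htarget : |(dist (f p) (f z) + c) - (dist (f p') (f z) + c)| ≤ dist p p' := by
    rw [add_sub_add_right_eq_sub]
    exact (abs_dist_sub_le _ _ _).trans (by simpa using hf.dist_le_mul p p')
  exact (abs_max_sub_min_add_sub_le _ _ _ _ _ _).trans <|
    max_le (add_le_add_left (abs_dist_sub_le _ _ _) _)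
      (htarget.trans (le_add_of_nonneg_right (abs_nonneg _)))

end PseudoMetricSpace

section MetricSpace

variable {X Y : Type*} [MetricSpace X] [CompactSpace X] [PseudoMetricSpace Y]
  {f : C(X, Y)} {c : ℝ}

theorem cylinderFun_zero (f : C(X, Y)) (c : ℝ) (p : X) : cylinderFun f c p 0 = distFun X p := by
  ext z
  rw [cylinderFun_apply, sub_zero, add_zero]
  exact sup_inf_self

theorem dist_cylinderFun_distFun_le (hf : LipschitzWith 1 f) (p : X) (t : ℝ) :
    dist (cylinderFun f c p t) (distFun X p) ≤ |t| := by
  simpa only [cylinderFun_zero, dist_self, zero_add, sub_zero] using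
    dist_cylinderFun_le hf p p t 0

end MetricSpace

theorem submetry_mapping_cylinder_general {X Y : Type*} [MetricSpace X] [CompactSpace X]
    [PseudoMetricSpace Y] (π : X → Y) (hπ : LipschitzWith 1 π) (ρ₀ : ℝ)
    (hdist : ∀ p z : X, dist p z ≤ dist (π p) (π z) + 2 * ρ₀) :
    ∃ h : X → ℝ → BoundedContinuousFunction X ℝ,
      (∀ (p : X) (t : ℝ) (z : X),
        h p t z = max (dist p z - t) (min (dist p z + t) (dist (π p) (π z) + ρ₀))) ∧
      (∀ p : X, h p 0 = distFun X p) ∧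
      (∀ (p z : X), h p ρ₀ z = dist (π p) (π z) + ρ₀) ∧
      (∀ (p : X) (t : ℝ), ‖h p t - distFun X p‖ ≤ |t| ∧
        infDist (h p t) (Set.range (distFun X)) ≤ |t|) ∧
      (∀ (p p' : X) (t t' : ℝ), ‖h p t - h p' t'‖ ≤ dist p p' + |t - t'|) := by
  let f : C(X, Y) := ⟨π, hπ.continuous⟩
  have hshort (p z : X) : dist (π p) (π z) ≤ dist p z := by simpa using hπ.dist_le_mul p z
  have hnear (p : X) (t : ℝ) : dist (cylinderFun f ρ₀ p t) (distFun X p) ≤ |t| :=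
    dist_cylinderFun_distFun_le hπ p t
  refine ⟨cylinderFun f ρ₀, cylinderFun_apply f ρ₀, cylinderFun_zero f ρ₀,
    fun p z => cylinderFun_self_apply (hshort p z) (hdist p z), fun p t => ⟨?_, ?_⟩,
    fun p p' t t' => ?_⟩
  · exact dist_eq_norm (cylinderFun f ρ₀ p t) (distFun X p) ▸ hnear p t
  · exact (infDist_le_dist_of_mem (Set.mem_range_self p)).trans (hnear p t)
  · exact dist_eq_norm (cylinderFun f ρ₀ p t) _ ▸ dist_cylinderFun_le hπ p p' t t'

/-- The mapping-cylinder homotopy of the Kuratowski embedding associated with a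
submetry whose fibers have diameter at most `2ρ₀`: the family
`h_{p,t}(z) = max(dist p z − t, min(dist p z + t, dist (π p) (π z) + ρ₀))`
is well defined in `C_b(X, ℝ)`, starts at `dist_p`, ends at the lifted base distance
function translated by `ρ₀`, stays within distance `t ≤ ρ₀` of `Φ(X)`, and is
continuous in `(p, t)`. -/
theorem submetry_mapping_cylinder {X Y : Type*} [MetricSpace X] [CompactSpace X]
    [MetricSpace Y] (π : X → Y) (hπ : IsSubmetry π) (ρ₀ : ℝ) (hρ₀ : 0 ≤ ρ₀)
    (hdiam : ∀ y : Y, Metric.diam (π ⁻¹' {y}) ≤ 2 * ρ₀) :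
    ∃ h : X → ℝ → BoundedContinuousFunction X ℝ,
      (∀ (p : X) (t : ℝ) (z : X),
        h p t z = max (dist p z - t) (min (dist p z + t) (dist (π p) (π z) + ρ₀))) ∧
      (∀ p : X, h p 0 = distFun X p) ∧
      (∀ (p z : X), h p ρ₀ z = dist (π p) (π z) + ρ₀) ∧
      (∀ p : X, ∀ t ∈ Set.Icc (0 : ℝ) ρ₀, ‖h p t - distFun X p‖ ≤ t ∧
        Metric.infDist (h p t) (Set.range (distFun X)) ≤ ρ₀) ∧
      (∀ (p p' : X), ∀ t ∈ Set.Icc (0 : ℝ) ρ₀, ∀ t' ∈ Set.Icc (0 : ℝ) ρ₀,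
        ‖h p t - h p' t'‖ ≤ dist p p' + |t - t'|) := by
  have hdist (p z : X) : dist p z ≤ dist (π p) (π z) + 2 * ρ₀ :=
    (hπ.dist_le_dist_add_diam_fiber isBounded_of_compactSpace z).trans
      (by gcongr; exact hdiam _)
  obtain ⟨h, happly, hzero, hend, hnear, hlip⟩ :=
    submetry_mapping_cylinder_general π hπ.lipschitzWith_one ρ₀ hdist
  refine ⟨h, happly, hzero, hend, fun p t ht => ?_, fun p p' t _ t' _ => hlip p p' t t'⟩
  obtain ⟨hnorm, hinf⟩ := abs_of_nonneg ht.1 ▸ hnear p t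
  exact ⟨hnorm, hinf.trans ht.2⟩
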